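/- arXiv:2211.09989 — 7 statements merged into one kernel-verified Lean document; each statement's English description precedes it below -/
import Mathlib

section
/- There exists a group G such that G is finitely generated, G is infinite, and every element of G has finite order. -/
/-!
The proof uses the Gupta–Sidki `3`-group: the group of automorphisms of the rooted ternary tree
generated by the rotation `a` of the first level and the automorphism `t = (a, a⁻¹, t)`.
Vertices of the tree are lists over `ZMod 3`.
-/

namespace GuptaSidki

lemma eq_zero_or_one_or_two (x : ZMod 3) : x = 0 ∨ x = 1 ∨ x = 2 := by
  revert x
  decide

/-- Add `k` to the first letter of a word. -/
def rotateFun (k : ZMod 3) : List (ZMod 3) → List (ZMod 3)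
  | [] => []
  | x :: w => (x + k) :: w

/-- The rotation of the first level of the ternary tree by `k`. -/
def rotate (k : ZMod 3) : Equiv.Perm (List (ZMod 3)) where
  toFun := rotateFun k
  invFun := rotateFun (-k)
  left_inv w := by cases w <;> simp [rotateFun]
  right_inv w := by cases w <;> simp [rotateFun]

@[simp] lemma rotate_nil (k : ZMod 3) : rotate k [] = [] := rfl

@[simp] lemma rotate_cons (k x : ZMod 3) (w : List (ZMod 3)) :
    rotate k (x :: w) = (x + k) :: w := rfl

@[simp] lemma rotate_zero : rotate 0 = 1 := by
  ext1 w
  cases w <;> simp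

lemma rotate_mul_rotate (k l : ZMod 3) : rotate k * rotate l = rotate (k + l) := by
  ext1 w
  cases w <;> simp [add_assoc, add_comm l k]

lemma rotate_inv (k : ZMod 3) : (rotate k)⁻¹ = rotate (-k) := by
  rw [inv_eq_iff_mul_eq_one, rotate_mul_rotate, add_neg_cancel, rotate_zero]

/-- The amount by which `t` rotates the subtree below the first-level vertex `x`, for `x ≠ 2`. -/
def twist (x : ZMod 3) : ZMod 3 := if x = 0 then 1 else if x = 1 then -1 else 0

/-- The recursively defined generator `t = (a, a⁻¹, t)` as a function. -/
def spineFun : List (ZMod 3) → List (ZMod 3)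
  | [] => []
  | x :: w => x :: if x = 2 then spineFun w else rotate (twist x) w

lemma spineFun_spineFun_spineFun (w : List (ZMod 3)) :
    spineFun (spineFun (spineFun w)) = w := by
  induction w with
  | nil => rfl
  | cons x w ih =>
    by_cases hx : x = 2
    · simp [spineFun, hx, ih]
    · simp only [spineFun, hx, if_false, ← Equiv.Perm.mul_apply, rotate_mul_rotate]
      have h : ∀ y : ZMod 3, y + (y + y) = 0 := by decide
      simp [h]

/-- The generator `t = (a, a⁻¹, t)`. -/
def spine : Equiv.Perm (List (ZMod 3)) where
  toFun := spineFun
  invFun w := spineFun (spineFun w)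
  left_inv := spineFun_spineFun_spineFun
  right_inv := spineFun_spineFun_spineFun

@[simp] lemma spine_nil : spine [] = [] := rfl

lemma spine_cons (x : ZMod 3) (w : List (ZMod 3)) :
    spine (x :: w) = x :: (if x = 2 then spine else rotate (twist x)) w := by
  split_ifs with h
  · simp [spine, spineFun, h]
  · simp [spine, spineFun, h]

lemma spine_pow_three : spine ^ 3 = 1 := by
  ext1 w
  exact spineFun_spineFun_spineFun w

/-- `IsWord n e g` says that `g` is a product of rotations and of exactly `n` copies of `spine`,
in which the amounts of the rotations add up to `e`. -/
inductive IsWord : ℕ → ZMod 3 → Equiv.Perm (List (ZMod 3)) → Prop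
  | one : IsWord 0 0 1
  | rotate_mul (k : ZMod 3) {n : ℕ} {e : ZMod 3} {g : Equiv.Perm (List (ZMod 3))} :
      IsWord n e g → IsWord n (k + e) (rotate k * g)
  | spine_mul {n : ℕ} {e : ZMod 3} {g : Equiv.Perm (List (ZMod 3))} :
      IsWord n e g → IsWord (n + 1) e (spine * g)

lemma isWord_rotate (k : ZMod 3) : IsWord 0 k (rotate k) := by
  simpa using IsWord.one.rotate_mul k

lemma isWord_spine : IsWord 1 0 spine := by
  simpa using IsWord.one.spine_mul

lemma IsWord.mul {n m : ℕ} {e f : ZMod 3} {g h : Equiv.Perm (List (ZMod 3))}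
    (hg : IsWord n e g) (hh : IsWord m f h) : IsWord (n + m) (e + f) (g * h) := by
  induction hg with
  | one => simpa using hh
  | rotate_mul k _ ih => simpa [mul_assoc, add_assoc] using ih.rotate_mul k
  | spine_mul _ ih => simpa [mul_assoc, add_right_comm] using ih.spine_mul

lemma IsWord.exists_pow {n : ℕ} {e : ZMod 3} {g : Equiv.Perm (List (ZMod 3))}
    (hg : IsWord n e g) (k : ℕ) : ∃ m f, IsWord m f (g ^ k) := by
  induction k with
  | zero => exact ⟨0, 0, IsWord.one⟩
  | succ k ih =>
    obtain ⟨m, f, h⟩ := ih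
    exact ⟨_, _, pow_succ g k ▸ h.mul hg⟩

lemma IsWord.apply_nil {n : ℕ} {e : ZMod 3} {g : Equiv.Perm (List (ZMod 3))}
    (hg : IsWord n e g) : g [] = [] := by
  induction hg with
  | one => rfl
  | rotate_mul k _ ih => simp [ih]
  | spine_mul _ ih => simp [ih]

/-- The sections of a word at the first level share its copies of `spine` among themselves, and
their rotation amounts cancel. If one section receives all the copies, then the word is, up to
rotations on both sides, a power of `spine`. -/
lemma IsWord.exists_sections {n : ℕ} {e : ZMod 3} {g : Equiv.Perm (List (ZMod 3))}
    (hg : IsWord n e g) :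
    ∃ (s : ZMod 3 → Equiv.Perm (List (ZMod 3))) (N : ZMod 3 → ℕ) (E : ZMod 3 → ZMod 3),
      (∀ x w, g (x :: w) = (x + e) :: s x w) ∧ (∀ x, IsWord (N x) (E x) (s x)) ∧
      N 0 + N 1 + N 2 = n ∧ E 0 + E 1 + E 2 = 0 ∧
      ∀ x, N x = n → g = rotate (x + e - 2) * spine ^ n * rotate (2 - x) := by
  induction hg with
  | one =>
    refine ⟨fun _ => 1, fun _ => 0, fun _ => 0, by simp, fun _ => IsWord.one, rfl, rfl, ?_⟩
    intro x _
    simp [rotate_mul_rotate]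
  | @rotate_mul k n e g _ ih =>
    obtain ⟨s, N, E, hs, hw, hN, hE, hx⟩ := ih
    refine ⟨s, N, E, fun x w => ?_, hw, hN, hE, fun x h => ?_⟩
    · simp [hs, add_assoc, add_comm e k]
    · rw [hx x h, ← mul_assoc, ← mul_assoc, rotate_mul_rotate]
      congr 3
      ring
  | @spine_mul n e g _ ih =>
    obtain ⟨s, N, E, hs, hw, hN, hE, hx⟩ := ih
    refine ⟨fun x => (if x + e = 2 then spine else rotate (twist (x + e))) * s x,
      fun x => N x + if x + e = 2 then 1 else 0, fun x => twist (x + e) + E x,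
      fun x w => ?_, fun x => ?_, ?_, ?_, fun x h => ?_⟩
    · rw [Equiv.Perm.mul_apply, hs, spine_cons, Equiv.Perm.mul_apply]
    · dsimp only
      split_ifs with h
      · rw [h, show twist 2 = 0 from by decide, zero_add]
        exact (hw x).spine_mul
      · exact (hw x).rotate_mul _
    · have key : ∀ e : ZMod 3, (if 0 + e = 2 then 1 else 0) + (if 1 + e = 2 then 1 else 0) +
          (if 2 + e = 2 then 1 else 0) = 1 := by decide
      have := key e
      dsimp only
      omega
    · have key : ∀ e : ZMod 3, twist (0 + e) + twist (1 + e) + twist (2 + e) = 0 := by decide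
      linear_combination key e + hE
    · have hle : N x ≤ n := by
        rcases eq_zero_or_one_or_two x with rfl | rfl | rfl <;> omega
      dsimp only at h
      split_ifs at h with h2
      · rw [hx x (by omega), h2, sub_self, rotate_zero, one_mul, one_mul, pow_succ', mul_assoc]
      · omega

/-- A tree automorphism that fixes the first level and has torsion sections is torsion. -/
lemma isOfFinOrder_of_sections {g : Equiv.Perm (List (ZMod 3))}
    {s : ZMod 3 → Equiv.Perm (List (ZMod 3))} (h0 : g [] = [])
    (hs : ∀ x w, g (x :: w) = x :: s x w) (h : ∀ x, IsOfFinOrder (s x)) : IsOfFinOrder g := by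
  have hpow : ∀ (k : ℕ) x w, (g ^ k) (x :: w) = x :: (s x ^ k) w := by
    intro k
    induction k with
    | zero => simp
    | succ k ih => intro x w; simp [pow_succ', ih, hs]
  refine isOfFinOrder_iff_pow_eq_one.2
    ⟨∏ x, orderOf (s x), Finset.prod_pos fun x _ => (h x).orderOf_pos, ?_⟩
  ext1 w
  cases w with
  | nil => exact Function.IsFixedPt.perm_pow h0 _
  | cons x w =>
    rw [hpow, orderOf_dvd_iff_pow_eq_one.1
      (Finset.dvd_prod_of_mem (fun x => orderOf (s x)) (Finset.mem_univ x))]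
    rfl

lemma IsWord.isOfFinOrder {n : ℕ} {e : ZMod 3} {g : Equiv.Perm (List (ZMod 3))}
    (hg : IsWord n e g) : IsOfFinOrder g := by
  induction n using Nat.strong_induction_on generalizing e g with
  | _ n ih =>
  have stab : ∀ {g : Equiv.Perm (List (ZMod 3))}, IsWord n 0 g → IsOfFinOrder g := by
    intro g hg
    obtain ⟨s, N, E, hs, hw, hN, -, hx⟩ := hg.exists_sections
    by_cases hex : ∃ x, N x = n
    · obtain ⟨x, hxn⟩ := hex
      refine isOfFinOrder_iff_pow_eq_one.2 ⟨3, by norm_num, ?_⟩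
      rw [hx x hxn, add_zero, ← neg_sub x 2, ← rotate_inv, conj_pow, ← pow_mul, mul_comm n 3,
        pow_mul, spine_pow_three, one_pow, mul_one, mul_inv_cancel]
    · push Not at hex
      refine isOfFinOrder_of_sections (s := s) hg.apply_nil (by simpa using hs)
        fun x => ih (N x) (lt_of_le_of_ne ?_ (hex x)) (hw x)
      rcases eq_zero_or_one_or_two x with rfl | rfl | rfl <;> omega
  by_cases he : e = 0
  · exact stab (he ▸ hg)
  obtain ⟨s, N, E, hs, hw, hN, hE, -⟩ := hg.exists_sections
  refine IsOfFinOrder.of_pow (n := 3) ?_ (by norm_num)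
  refine isOfFinOrder_of_sections (s := fun x => s (x + e + e) * s (x + e) * s x)
    (Function.IsFixedPt.perm_pow hg.apply_nil 3) (fun x w => ?_) fun x => stab ?_
  · have key : ∀ x e : ZMod 3, x + e + e + e = x := by decide
    simp [pow_succ, hs, key]
  · have hsum : N (x + e + e) + N (x + e) + N x = n ∧ E (x + e + e) + E (x + e) + E x = 0 := by
      have h11 : (1 + 1 : ZMod 3) = 2 := by decide
      have h12 : (1 + 2 : ZMod 3) = 0 := by decide
      have h21 : (2 + 1 : ZMod 3) = 0 := by decide
      have h22 : (2 + 2 : ZMod 3) = 1 := by decide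
      have he' := (eq_zero_or_one_or_two e).resolve_left he
      obtain rfl | rfl | rfl := eq_zero_or_one_or_two x <;> obtain rfl | rfl := he' <;>
        simp only [zero_add, h11, h12, h21, h22] <;>
        exact ⟨by omega, by linear_combination hE⟩
    have := ((hw (x + e + e)).mul (hw (x + e))).mul (hw x)
    rwa [hsum.1, hsum.2] at this

/-- The Gupta–Sidki `3`-group. -/
def group : Subgroup (Equiv.Perm (List (ZMod 3))) :=
  Subgroup.closure {rotate 1, spine}

lemma rotate_one_mem : rotate 1 ∈ group := Subgroup.subset_closure (by simp)

lemma spine_mem : spine ∈ group := Subgroup.subset_closure (by simp)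

lemma exists_isWord_of_mem {g : Equiv.Perm (List (ZMod 3))} (hg : g ∈ group) :
    ∃ n e, IsWord n e g := by
  induction hg using Subgroup.closure_induction with
  | mem x hx =>
    rcases hx with rfl | rfl
    · exact ⟨_, _, isWord_rotate 1⟩
    · exact ⟨_, _, isWord_spine⟩
  | one => exact ⟨_, _, IsWord.one⟩
  | mul x y _ _ hx hy =>
    obtain ⟨_, _, hx⟩ := hx
    obtain ⟨_, _, hy⟩ := hy
    exact ⟨_, _, hx.mul hy⟩
  | inv x _ hx =>
    obtain ⟨_, _, hx⟩ := hx
    rw [inv_eq_of_mul_eq_one_left (a := x ^ (orderOf x - 1))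
      (by rw [← pow_succ, Nat.sub_add_cancel hx.isOfFinOrder.orderOf_pos, pow_orderOf_eq_one])]
    exact hx.exists_pow _

/-- Every element of the group is the section at the vertex `0` of an element of the group
fixing that vertex. -/
lemma exists_section_eq {g : Equiv.Perm (List (ZMod 3))} (hg : g ∈ group) :
    ∃ h ∈ group, ∀ w, h (0 :: w) = 0 :: g w := by
  induction hg using Subgroup.closure_induction with
  | mem x hx =>
    rcases hx with rfl | rfl
    · exact ⟨spine, spine_mem, fun w => spine_cons 0 w⟩
    · refine ⟨rotate 1 * spine * (rotate 1 * rotate 1), mul_mem (mul_mem rotate_one_mem spine_mem)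
        (mul_mem rotate_one_mem rotate_one_mem), fun w => ?_⟩
      have h11 : (1 + 1 : ZMod 3) = 2 := by decide
      have h21 : (2 + 1 : ZMod 3) = 0 := by decide
      simp [spine_cons, h11, h21]
  | one => exact ⟨1, one_mem _, fun _ => rfl⟩
  | mul x y _ _ hx hy =>
    obtain ⟨h, hh, hx⟩ := hx
    obtain ⟨k, hk, hy⟩ := hy
    exact ⟨h * k, mul_mem hh hk, fun w => by simp [hx, hy]⟩
  | inv x _ hx =>
    obtain ⟨h, hh, hx⟩ := hx
    exact ⟨h⁻¹, inv_mem hh, fun w => by rw [Equiv.Perm.inv_eq_iff_eq, hx]; simp⟩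

instance infinite_group : Infinite group := by
  choose! f hf hfw using fun g (hg : g ∈ group) => exists_section_eq hg
  let F : group → group := fun g => ⟨f g, hf g g.2⟩
  have hF : Function.Injective F := by
    intro g h hgh
    ext1
    ext1 w
    have hfgh : f g = f h := congrArg Subtype.val hgh
    simpa [hfw g g.2, hfw h h.2] using congrArg (fun k => k (0 :: w)) hfgh
  by_contra hfin
  rw [not_infinite_iff_finite] at hfin
  obtain ⟨g, hg⟩ := Finite.surjective_of_injective hF ⟨rotate 1, rotate_one_mem⟩
  have hfg : f g = rotate 1 := congrArg Subtype.val hg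
  have h := hfw g g.2 []
  simp [hfg] at h

end GuptaSidki

/-- **Golod's theorem**: there exists a finitely generated infinite group in which
every element has finite order. -/
theorem golod_finitely_generated_infinite_torsion_group :
    ∃ (G : Type) (_ : Group G),
      Group.FG G ∧ Infinite G ∧ ∀ g : G, IsOfFinOrder g := by
  refine ⟨GuptaSidki.group, inferInstance, Group.closure_finite_fg _,
    GuptaSidki.infinite_group, fun g => ?_⟩
  obtain ⟨_, _, hg⟩ := GuptaSidki.exists_isWord_of_mem g.2
  exact Submonoid.isOfFinOrder_coe.1 hg.isOfFinOrder
end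

section
/- There exists a group G such that G is finitely generated, infinite, residually finite, and every element of G has finite order. -/
/-- A group is residually finite if the intersection of all its finite-index normal
subgroups is trivial. -/
def IsResiduallyFinite (G : Type*) [Group G] : Prop :=
    (⨅ (H : Subgroup G) (_ : H.Normal) (_ : H.FiniteIndex), H) = ⊥

namespace Grigorchuk

/-- The four standard generators of the Grigorchuk group. -/
inductive Letter
  | a | b | c | d
  deriving DecidableEq

open Letter

instance : Fintype Letter := ⟨{a, b, c, d}, fun x => by cases x <;> decide⟩

/-- The action of the generators on finite binary words. -/
def act : Letter → List Bool → List Bool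
  | _, [] => []
  | a, i :: v => (!i) :: v
  | b, false :: v => false :: act a v
  | b, true :: v => true :: act c v
  | c, false :: v => false :: act a v
  | c, true :: v => true :: act d v
  | d, false :: v => false :: v
  | d, true :: v => true :: act b v

theorem act_act_self (x : Letter) (v : List Bool) : act x (act x v) = v := by
  induction v generalizing x with
  | nil => cases x <;> rfl
  | cons i v ih => cases x <;> cases i <;> simp [act, ih]

theorem length_act (x : Letter) (v : List Bool) : (act x v).length = v.length := by
  induction v generalizing x with
  | nil => cases x <;> rfl
  | cons i v ih => cases x <;> cases i <;> simp [act, ih]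

theorem act_klein (v : List Bool) :
    act b (act c v) = act d v ∧ act c (act b v) = act d v ∧
    act c (act d v) = act b v ∧ act d (act c v) = act b v ∧
    act d (act b v) = act c v ∧ act b (act d v) = act c v := by
  induction v with
  | nil => simp [act]
  | cons i v ih => cases i <;> simp [act, act_act_self, ih]

/-- A generator as a permutation of the set of finite binary words. -/
def gen (x : Letter) : Equiv.Perm (List Bool) :=
  Function.Involutive.toPerm (act x) (act_act_self x)

theorem gen_apply (x : Letter) (v : List Bool) : gen x v = act x v := rfl

theorem gen_mul_self (x : Letter) : gen x * gen x = 1 :=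
  Equiv.ext (act_act_self x)

/-- The permutation represented by a word in the generators. -/
def eval (w : List Letter) : Equiv.Perm (List Bool) := (w.map gen).prod

theorem eval_nil : eval [] = 1 := rfl

theorem eval_cons (x : Letter) (w : List Letter) : eval (x :: w) = gen x * eval w := by
  simp [eval]

theorem eval_append (u w : List Letter) : eval (u ++ w) = eval u * eval w := by
  simp [eval]

theorem length_eval (w : List Letter) (v : List Bool) : (eval w v).length = v.length := by
  induction w with
  | nil => rfl
  | cons x w ih => rw [eval_cons, Equiv.Perm.mul_apply, gen_apply, length_act, ih]

/-- Weights of the generators, chosen so that `b`, `c`, `d` satisfy strict triangle inequalities and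
the weight of a word with enough occurrences of `a` drops when passing to sections. -/
def weight : Letter → ℕ
  | a => 3
  | b => 4
  | c => 3
  | d => 2

/-- The total weight of a word. -/
def wordWeight (w : List Letter) : ℕ := (w.map weight).sum

theorem wordWeight_cons (x : Letter) (w : List Letter) :
    wordWeight (x :: w) = weight x + wordWeight w := by
  simp [wordWeight]

theorem wordWeight_append (u w : List Letter) :
    wordWeight (u ++ w) = wordWeight u + wordWeight w := by
  simp [wordWeight]

/-- The number of occurrences of `a` in a word. -/
def countA (w : List Letter) : ℕ := w.countP (· = a)

/-- The number of letters of a word different from `a`. -/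
def countOther (w : List Letter) : ℕ := w.countP (· ≠ a)

/-- Two letters other than `a` multiply to a lighter word. -/
theorem exists_lighter_of_ne {x y : Letter} (hx : x ≠ a) (hy : y ≠ a) :
    ∃ r, eval r = gen x * gen y ∧ wordWeight r < weight x + weight y := by
  cases x <;> cases y <;> try contradiction
  · exact ⟨[], (gen_mul_self _).symm, by decide⟩
  · exact ⟨[d], Equiv.ext fun v => (act_klein v).1.symm, by decide⟩
  · exact ⟨[c], Equiv.ext fun v => (act_klein v).2.2.2.2.2.symm, by decide⟩
  · exact ⟨[d], Equiv.ext fun v => (act_klein v).2.1.symm, by decide⟩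
  · exact ⟨[], (gen_mul_self _).symm, by decide⟩
  · exact ⟨[b], Equiv.ext fun v => (act_klein v).2.2.1.symm, by decide⟩
  · exact ⟨[c], Equiv.ext fun v => (act_klein v).2.2.2.2.1.symm, by decide⟩
  · exact ⟨[b], Equiv.ext fun v => (act_klein v).2.2.2.1.symm, by decide⟩
  · exact ⟨[], (gen_mul_self _).symm, by decide⟩

/-- A word with more letters other than `a` than occurrences of `a` either is a single letter or
has two cyclically adjacent letters other than `a`. -/
theorem adjacent_or_count_le : ∀ w : List Letter,
    (∃ u x y v, x ≠ a ∧ y ≠ a ∧ w = u ++ x :: y :: v) ∨ countOther w ≤ countA w ∨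
      (countOther w = countA w + 1 ∧
        ((∃ x, w = [x]) ∨ ∃ x u y, x ≠ a ∧ y ≠ a ∧ w = x :: u ++ [y]))
  | [] => by simp [countOther, countA]
  | [x] => by cases x <;> simp [countOther, countA]
  | x :: y :: w => by
    by_cases hx : x = a
    · subst hx
      rcases adjacent_or_count_le (y :: w) with ⟨u, x, z, v, hx, hz, h⟩ | h | ⟨h, -⟩
      · exact .inl ⟨a :: u, x, z, v, hx, hz, by simp [h]⟩
      · right; left; simp [countOther, countA] at h ⊢; omega
      · right; left; simp [countOther, countA] at h ⊢; omega
    by_cases hy : y = a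
    · subst hy
      rcases adjacent_or_count_le w with ⟨u, p, q, v, hp, hq, h⟩ | h | ⟨h, h'⟩
      · exact .inl ⟨x :: a :: u, p, q, v, hp, hq, by simp [h]⟩
      · right; left; simp [countOther, countA, hx] at h ⊢; omega
      · right; right
        refine ⟨by simp [countOther, countA, hx] at h ⊢; omega, .inr ?_⟩
        rcases h' with ⟨z, rfl⟩ | ⟨z, u, t, -, ht, rfl⟩
        · refine ⟨x, [a], z, hx, ?_, rfl⟩
          rintro rfl
          simp [countOther, countA] at h
        · exact ⟨x, a :: z :: u, t, hx, ht, by simp⟩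
    · exact .inl ⟨[], x, y, w, hx, hy, rfl⟩

/-- The section of a generator at a vertex of the first level, as a word. -/
def letterSection : Letter → Bool → List Letter
  | a, _ => []
  | b, false => [a]
  | b, true => [c]
  | c, false => [a]
  | c, true => [d]
  | d, false => []
  | d, true => [b]

/-- Whether a generator exchanges the two vertices of the first level. -/
def letterFlip : Letter → Bool
  | a => true
  | _ => false

/-- Whether a word exchanges the two vertices of the first level. -/
def wordFlip : List Letter → Bool
  | [] => false
  | x :: w => letterFlip x ^^ wordFlip w

/-- The section of a word at a vertex of the first level. -/
def wordSection : List Letter → Bool → List Letter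
  | [], _ => []
  | x :: w, i => letterSection x (wordFlip w ^^ i) ++ wordSection w i

theorem gen_apply_cons (x : Letter) (i : Bool) (v : List Bool) :
    gen x (i :: v) = (letterFlip x ^^ i) :: eval (letterSection x i) v := by
  cases x <;> cases i <;>
    simp [gen_apply, act, letterFlip, letterSection, eval_cons, eval_nil]

theorem eval_apply_cons (w : List Letter) (i : Bool) (v : List Bool) :
    eval w (i :: v) = (wordFlip w ^^ i) :: eval (wordSection w i) v := by
  induction w with
  | nil => simp [eval_nil, wordFlip, wordSection]
  | cons x w ih =>
    simp [eval_cons, ih, gen_apply_cons, wordFlip, wordSection, eval_append]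

theorem eval_apply_nil (w : List Letter) : eval w [] = [] :=
  List.length_eq_zero_iff.mp (length_eval w [])

theorem wordWeight_sections (w : List Letter) :
    wordWeight (wordSection w false) + wordWeight (wordSection w true) + 3 * countA w +
      countOther w = wordWeight w + 3 * countOther w := by
  induction w with
  | nil => rfl
  | cons x w ih =>
    cases x <;> cases hf : wordFlip w <;>
      simp [wordSection, hf, letterSection, wordWeight_cons, weight, countA,
        countOther] at ih ⊢ <;>
      simp [wordWeight] at ih ⊢ <;> omega

theorem isOfFinOrder_of_sections {g g₀ g₁ : Equiv.Perm (List Bool)} (hnil : g [] = [])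
    (hg₀ : ∀ v, g (false :: v) = false :: g₀ v) (hg₁ : ∀ v, g (true :: v) = true :: g₁ v)
    (h₀ : IsOfFinOrder g₀) (h₁ : IsOfFinOrder g₁) : IsOfFinOrder g := by
  obtain ⟨m, hm, hgm⟩ := isOfFinOrder_iff_pow_eq_one.mp h₀
  obtain ⟨n, hn, hgn⟩ := isOfFinOrder_iff_pow_eq_one.mp h₁
  have pow_cons (i : Bool) (k : Equiv.Perm (List Bool)) (hk : ∀ v, g (i :: v) = i :: k v)
      (j : ℕ) (v : List Bool) : (g ^ j) (i :: v) = i :: (k ^ j) v := by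
    induction j with
    | zero => rfl
    | succ j ih => rw [pow_succ', pow_succ', Equiv.Perm.mul_apply, ih, hk, Equiv.Perm.mul_apply]
  refine isOfFinOrder_iff_pow_eq_one.mpr ⟨m * n, Nat.mul_pos hm hn, Equiv.ext fun v => ?_⟩
  match v with
  | [] => exact Function.IsFixedPt.perm_pow hnil _
  | false :: v => rw [pow_cons _ _ hg₀, pow_mul, hgm, one_pow]; rfl
  | true :: v => rw [pow_cons _ _ hg₁, mul_comm, pow_mul, hgn, one_pow]; rfl

theorem isOfFinOrder_mul_swap {G : Type*} [Group G] {g h : G} (hgh : IsOfFinOrder (g * h)) :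
    IsOfFinOrder (h * g) := by
  simpa [mul_assoc] using (MulAut.conj h).toMonoidHom.isOfFinOrder hgh

theorem isOfFinOrder_gen (x : Letter) : IsOfFinOrder (gen x) :=
  isOfFinOrder_iff_pow_eq_one.mpr ⟨2, two_pos, by rw [pow_two, gen_mul_self]⟩

theorem isOfFinOrder_eval (w : List Letter) : IsOfFinOrder (eval w) := by
  induction hn : wordWeight w using Nat.strong_induction_on generalizing w with
  | _ n ih =>
  subst hn
  have adjacent (u v : List Letter) {x y : Letter} (hx : x ≠ a) (hy : y ≠ a)
      (h : wordWeight u + wordWeight v + weight x + weight y = wordWeight w) :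
      IsOfFinOrder (eval u * (gen x * gen y) * eval v) := by
    obtain ⟨r, hr, hlt⟩ := exists_lighter_of_ne hx hy
    have := ih _ (by simp only [wordWeight_append]; omega) (u ++ r ++ v) rfl
    rwa [eval_append, eval_append, hr] at this
  rcases adjacent_or_count_le w with ⟨u, x, y, v, hx, hy, h⟩ | h |
    ⟨-, ⟨x, rfl⟩ | ⟨x, u, y, hx, hy, h⟩⟩
  · have := adjacent u v hx hy (by simp only [h, wordWeight_append, wordWeight_cons]; omega)
    simpa [h, eval_append, eval_cons, mul_assoc] using this
  · rcases eq_or_ne w [] with rfl | hw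
    · exact IsOfFinOrder.one
    have hpos : 0 < countA w + countOther w := by
      obtain ⟨x, t, rfl⟩ := List.exists_cons_of_ne_nil hw
      cases x <;> simp [countA, countOther]
    have hsum := wordWeight_sections w
    cases hf : wordFlip w
    · refine isOfFinOrder_of_sections (eval_apply_nil w) (fun v => ?_) (fun v => ?_)
        (ih _ (by omega) (wordSection w false) rfl) (ih _ (by omega) (wordSection w true) rfl)
      all_goals simp [eval_apply_cons, hf]
    · refine IsOfFinOrder.of_pow (n := 2) ?_ two_ne_zero
      refine isOfFinOrder_of_sections (by simp [pow_two, eval_apply_nil])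
        (fun v => ?_) (fun v => ?_)
        (ih _ (by rw [wordWeight_append]; omega) (wordSection w true ++ wordSection w false) rfl)
        (ih _ (by rw [wordWeight_append]; omega) (wordSection w false ++ wordSection w true) rfl)
      all_goals simp [pow_two, eval_apply_cons, hf, eval_append]
  · simpa [eval_cons, eval_nil] using isOfFinOrder_gen x
  · have := adjacent [] u hy hx
      (by simp [h, wordWeight]; omega)
    rw [eval_nil, one_mul, mul_assoc] at this
    simpa [h, eval_append, eval_cons, eval_nil, mul_assoc] using isOfFinOrder_mul_swap this

/-- Every word is the section at `false` of some word fixing the first level. -/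
theorem exists_eval_false_cons (w : List Letter) :
    ∃ w', ∀ v, eval w' (false :: v) = false :: eval w v := by
  induction w with
  | nil => exact ⟨[], fun v => rfl⟩
  | cons x w ih =>
    obtain ⟨w', hw'⟩ := ih
    have hx : ∃ u, ∀ v, eval u (false :: v) = false :: gen x v := by
      cases x
      · exact ⟨[b], fun v => rfl⟩
      · exact ⟨[a, d, a], fun v => rfl⟩
      · exact ⟨[a, b, a], fun v => rfl⟩
      · exact ⟨[a, c, a], fun v => rfl⟩
    obtain ⟨u, hu⟩ := hx
    exact ⟨u ++ w', fun v => by simp [eval_append, hw', hu, eval_cons]⟩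

/-- The generators act transitively on every level of the binary tree. -/
theorem exists_eval_replicate (v : List Bool) :
    ∃ w, eval w (List.replicate v.length false) = v := by
  induction v with
  | nil => exact ⟨[], rfl⟩
  | cons i v ih =>
    obtain ⟨w, hw⟩ := ih
    obtain ⟨w', hw'⟩ := exists_eval_false_cons w
    cases i
    · exact ⟨w', by rw [List.length_cons, List.replicate_succ, hw', hw]⟩
    · refine ⟨a :: w', ?_⟩
      rw [List.length_cons, List.replicate_succ, eval_cons, Equiv.Perm.mul_apply, hw', hw]
      rfl

/-- The Grigorchuk group. -/
def grigorchukGroup : Subgroup (Equiv.Perm (List Bool)) := Subgroup.closure (Set.range gen)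

theorem eval_mem (w : List Letter) : eval w ∈ grigorchukGroup :=
  Subgroup.list_prod_mem _ fun g hg => by
    obtain ⟨x, -, rfl⟩ := List.mem_map.mp hg
    exact Subgroup.subset_closure ⟨x, rfl⟩

theorem exists_eval_eq {g : Equiv.Perm (List Bool)} (hg : g ∈ grigorchukGroup) :
    ∃ w, eval w = g := by
  induction hg using Subgroup.closure_induction with
  | mem g hg =>
    obtain ⟨x, rfl⟩ := hg
    exact ⟨[x], by simp [eval_cons, eval_nil]⟩
  | one => exact ⟨[], rfl⟩
  | mul g h _ _ ihg ihh =>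
    obtain ⟨u, rfl⟩ := ihg
    obtain ⟨w, rfl⟩ := ihh
    exact ⟨u ++ w, eval_append u w⟩
  | inv g _ ih =>
    obtain ⟨w, rfl⟩ := ih
    refine ⟨w.reverse, eq_inv_of_mul_eq_one_left ?_⟩
    clear * -
    induction w with
    | nil => rfl
    | cons x w ih =>
      rw [List.reverse_cons, eval_append, eval_cons, eval_cons, eval_nil, mul_one, mul_assoc,
        ← mul_assoc (gen x), gen_mul_self, one_mul, ih]

theorem length_apply (g : grigorchukGroup) (v : List Bool) : (g.1 v).length = v.length := by
  obtain ⟨w, hw⟩ := exists_eval_eq g.2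
  rw [← hw, length_eval]

/-- The action of the Grigorchuk group on a level of the binary tree. -/
def levelHom (n : ℕ) : grigorchukGroup →* Equiv.Perm (List.Vector Bool n) where
  toFun g := g.1.subtypePerm fun v => by rw [length_apply]
  map_one' := rfl
  map_mul' _ _ := rfl

theorem isResiduallyFinite : IsResiduallyFinite grigorchukGroup := by
  refine (Subgroup.eq_bot_iff_forall _).mpr fun g hg => Subtype.ext (Equiv.ext fun v => ?_)
  simp only [Subgroup.mem_iInf] at hg
  have hker := hg (levelHom v.length).ker inferInstance inferInstance
  have hv := DFunLike.congr_fun (MonoidHom.mem_ker.mp hker) ⟨v, rfl⟩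
  exact congrArg Subtype.val hv

theorem infinite : Infinite grigorchukGroup := by
  refine not_finite_iff_infinite.mp fun hfin => ?_
  have card_le (n : ℕ) : 2 ^ n ≤ Nat.card grigorchukGroup := by
    let f (g : grigorchukGroup) : List.Vector Bool n :=
      levelHom n g ⟨List.replicate n false, List.length_replicate⟩
    have hf : Function.Surjective f := by
      rintro ⟨v, rfl⟩
      obtain ⟨w, hw⟩ := exists_eval_replicate v
      exact ⟨⟨eval w, eval_mem w⟩, Subtype.ext hw⟩
    simpa [Nat.card_eq_fintype_card] using Nat.card_le_card_of_surjective f hf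
  exact (card_le _).not_gt Nat.lt_two_pow_self

theorem fg : Group.FG grigorchukGroup :=
  Group.closure_finite_fg (Set.range gen)

end Grigorchuk

/-- There exists a finitely generated, infinite, residually finite group in which
every element has finite order. -/
theorem exists_finitely_generated_infinite_residually_finite_torsion_group :
    ∃ (G : Type) (_ : Group G),
      Group.FG G ∧ Infinite G ∧ IsResiduallyFinite G ∧ ∀ g : G, IsOfFinOrder g := by
  refine ⟨Grigorchuk.grigorchukGroup, inferInstance, Grigorchuk.fg, Grigorchuk.infinite,
    Grigorchuk.isResiduallyFinite, fun g => ?_⟩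
  obtain ⟨w, hw⟩ := Grigorchuk.exists_eval_eq g.2
  rw [← Submonoid.isOfFinOrder_coe (H := Grigorchuk.grigorchukGroup.toSubmonoid) (x := g)]
  exact hw ▸ Grigorchuk.isOfFinOrder_eval w
end

section
/- Let G be a group admitting a finite presentation with generating set X and relation set R, and set d = |X| - |R|. If d > 0, then there exists a surjective group homomorphism from G onto the free abelian group ℤ^d. -/
/-- A finitely generated module over a principal ideal domain surjects onto the free module of any
rank not exceeding its own. -/
theorem Module.exists_surjective_pi_of_le_finrank {A M : Type*} [CommRing A] [IsDomain A]
    [IsPrincipalIdealRing A] [AddCommGroup M] [Module A M] [Module.Finite A M] {d : ℕ}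
    (hd : d ≤ Module.finrank A M) : ∃ f : M →ₗ[A] (Fin d → A), Function.Surjective f := by
  have hrank : Module.finrank A (M ⧸ Submodule.torsion A M) = Module.finrank A M :=
    finrank_quotient_eq_of_le_torsion le_rfl
  let b := Module.finBasisOfFinrankEq A (M ⧸ Submodule.torsion A M) hrank
  refine ⟨LinearMap.funLeft A A (Fin.castLE hd) ∘ₗ b.equivFun.toLinearMap ∘ₗ
    (Submodule.torsion A M).mkQ, ?_⟩
  exact (LinearMap.funLeft_surjective_of_injective A A _ (Fin.castLE_injective hd)).comp
    (b.equivFun.surjective.comp (Submodule.mkQ_surjective _))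

/-- If a group `G` has a finite presentation `⟨X ∣ R⟩` with `d = |X| - |R| > 0`, then
`G` surjects onto the free abelian group `ℤ^d`. -/
theorem surjects_onto_free_abelian_of_finite_presentation
    (G : Type*) [Group G] (X : Type) [Fintype X] (R : Finset (FreeGroup X))
    (e : G ≃* PresentedGroup (R : Set (FreeGroup X)))
    (d : ℕ) (hd : (d : ℤ) = (Fintype.card X : ℤ) - R.card) (hpos : 0 < d) :
    ∃ φ : G →* Multiplicative (Fin d → ℤ), Function.Surjective φ := by
  classical
  let a : FreeGroup X →* Multiplicative (X → ℤ) :=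
    FreeGroup.lift fun x => Multiplicative.ofAdd (Pi.single x 1)
  let S : Finset (X → ℤ) := R.image fun r => (a r).toAdd
  let N : Submodule ℤ (X → ℤ) := Submodule.span ℤ (S : Set (X → ℤ))
  have hN : Module.finrank ℤ N ≤ R.card :=
    (finrank_span_finset_le_card S).trans Finset.card_image_le
  have hQ : d ≤ Module.finrank ℤ ((X → ℤ) ⧸ N) := by
    have h := N.finrank_quotient_add_finrank
    rw [Module.finrank_fintype_fun_eq_card] at h
    omega
  obtain ⟨f, hf⟩ := Module.exists_surjective_pi_of_le_finrank hQ
  let g : (X → ℤ) →ₗ[ℤ] (Fin d → ℤ) := f ∘ₗ N.mkQ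
  have hg : Function.Surjective g := hf.comp N.mkQ_surjective
  have ha : Function.Surjective a := by
    intro v
    refine ⟨(Finset.univ.toList.map fun x => FreeGroup.of x ^ v.toAdd x).prod, ?_⟩
    rw [map_list_prod, List.map_map, Finset.prod_map_toList]
    apply Multiplicative.toAdd.injective
    ext y
    simp [a, toAdd_prod, Pi.single_apply]
  let ψ : FreeGroup X →* Multiplicative (Fin d → ℤ) := g.toAddMonoidHom.toMultiplicative.comp a
  have hψ : Function.Surjective ψ :=
    Function.Surjective.comp (g := g.toAddMonoidHom.toMultiplicative) hg ha
  have hR : Subgroup.normalClosure (R : Set (FreeGroup X)) ≤ ψ.ker := by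
    refine Subgroup.normalClosure_le_normal fun r hr => ?_
    have hrN : (a r).toAdd ∈ N :=
      Submodule.subset_span (Finset.mem_coe.2 (Finset.mem_image_of_mem _ hr))
    have hr0 : g (a r).toAdd = 0 := by
      simp [g, (Submodule.Quotient.mk_eq_zero N).2 hrN]
    exact congrArg Multiplicative.ofAdd hr0
  exact ⟨(QuotientGroup.lift _ ψ hR).comp e.toMonoidHom,
    (QuotientGroup.lift_surjective_of_surjective _ ψ hψ hR).comp e.surjective⟩
end

section
/- Let G be a group that can be generated by n elements. Then for every finite presentation of G with generating set X and relation set R, one has |X| - |R| ≤ n. Consequently, the difference |X| - |R| is uniformly bounded from above over all finite presentations of G. -/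
/-- The homomorphism from the free group on `X` to the additive group of linear forms on `X → ℚ`
that sends each generator to the corresponding coordinate form. -/
noncomputable def freeGroupToDual (X : Type*) :
    FreeGroup X →* Multiplicative ((X → ℚ) →ₗ[ℚ] ℚ) :=
  FreeGroup.lift fun x => Multiplicative.ofAdd (LinearMap.proj x)

/-- The homomorphism from the free group on `X` to `ℚ` that sends each generator `x` to `v x`. -/
noncomputable def freeGroupEval {X : Type*} (v : X → ℚ) : FreeGroup X →* Multiplicative ℚ :=
  (AddMonoidHom.toMultiplicative (LinearMap.applyₗ (R := ℚ) (M₂ := ℚ) v).toAddMonoidHom).comp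
    (freeGroupToDual X)

theorem freeGroupEval_of {X : Type*} (v : X → ℚ) (x : X) :
    freeGroupEval v (FreeGroup.of x) = Multiplicative.ofAdd (v x) := by
  simp [freeGroupEval, freeGroupToDual]

/-- A homomorphism on a free group is trivial if it kills the relators of a presented group and
lifts of a generating set of that group. -/
theorem FreeGroup.hom_eq_one_of_presentedGroup {X G H ι : Type*} [Group G] [Group H]
    {R : Set (FreeGroup X)} (e : G ≃* PresentedGroup R) {s : ι → G}
    (hs : Subgroup.closure (Set.range s) = ⊤) {lifts : ι → FreeGroup X}
    (h_lifts : ∀ i, PresentedGroup.mk R (lifts i) = e (s i)) {f : FreeGroup X →* H}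
    (hR : ∀ r ∈ R, f r = 1) (hf : ∀ i, f (lifts i) = 1) : f = 1 := by
  let g : PresentedGroup R →* H :=
    QuotientGroup.lift _ f (Subgroup.normalClosure_le_normal (N := f.ker) hR)
  have hg : g.comp e.toMonoidHom = 1 := by
    refine MonoidHom.eq_of_eqOn_dense hs ?_
    rintro _ ⟨i, rfl⟩
    change g (e (s i)) = 1
    rw [← h_lifts i]
    exact hf i
  ext x
  have hx : g (e (e.symm (PresentedGroup.mk R (FreeGroup.of x)))) = 1 :=
    DFunLike.congr_fun hg _
  rw [e.apply_symm_apply] at hx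
  exact hx

/-- If a group `G` can be generated by `n` elements, then for every finite presentation
`⟨X ∣ R⟩` of `G` we have `|X| - |R| ≤ n`; in particular, the difference `|X| - |R|` is
uniformly bounded from above over all finite presentations of `G`. -/
theorem card_generators_sub_card_relations_le
    (G : Type*) [Group G] (n : ℕ) (S : Finset G) (hScard : S.card ≤ n)
    (hSgen : Subgroup.closure (S : Set G) = ⊤) :
    ∀ (X : Type) (_ : Fintype X) (R : Finset (FreeGroup X)),
      Nonempty (G ≃* PresentedGroup (R : Set (FreeGroup X))) →
        (Fintype.card X : ℤ) - R.card ≤ n := by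
  rintro X _ R ⟨e⟩
  choose lifts h_lifts using fun s : S =>
    QuotientGroup.mk'_surjective (Subgroup.normalClosure (R : Set (FreeGroup X))) (e s)
  let T : (X → ℚ) →ₗ[ℚ] (R ⊕ S → ℚ) := LinearMap.pi fun i =>
    (freeGroupToDual X (Sum.elim Subtype.val lifts i)).toAdd
  have hT : Function.Injective T := by
    refine (injective_iff_map_eq_zero T).2 fun v hv => ?_
    have h_one : freeGroupEval v = 1 := by
      refine FreeGroup.hom_eq_one_of_presentedGroup e (s := ((↑) : S → G))
        (by simpa using hSgen) h_lifts (fun r hr => ?_) fun i => ?_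
      · exact congrArg Multiplicative.ofAdd (congrFun hv (Sum.inl ⟨r, hr⟩))
      · exact congrArg Multiplicative.ofAdd (congrFun hv (Sum.inr i))
    funext x
    have hx := freeGroupEval_of v x
    rw [h_one] at hx
    exact (congrArg Multiplicative.toAdd hx).symm
  have h_card := LinearMap.finrank_le_finrank_of_injective hT
  simp only [Module.finrank_fintype_fun_eq_card, Fintype.card_sum, Fintype.card_coe] at h_card
  lia
end

section
/- Let F be a group, S a subset of F, and let R be the normal closure of S in F. Let K be a subgroup of F containing R, and let T be a left transversal of K in F (that is, F is the disjoint union of the cosets tK for t ∈ T). Then R equals the normal closure in K of the set { t⁻¹ s t : s ∈ S, t ∈ T }. -/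
/-- Let `R = ⟪S⟫_F` be the normal closure of a set `S` in a group `F`, let `K` be a
subgroup of `F` containing `R`, and let `T` be a left transversal of `K` in `F`.
Then `R` is the normal closure in `K` of the set `{t⁻¹ s t : s ∈ S, t ∈ T}`. -/
theorem normalClosure_eq_normalClosure_conjugates_in_subgroup
    (F : Type*) [Group F] (S : Set F) (K : Subgroup F)
    (hRK : Subgroup.normalClosure S ≤ K) (T : Set F)
    (hT : ∀ f : F, ∃! t, t ∈ T ∧ t⁻¹ * f ∈ K) :
    Subgroup.normalClosure S =
      Subgroup.map K.subtype
        (Subgroup.normalClosure {k : K | ∃ s ∈ S, ∃ t ∈ T, (k : F) = t⁻¹ * s * t}) := by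
  apply le_antisymm
  · refine (Subgroup.closure_le _).2 fun x hx => ?_
    obtain ⟨s, hs, hsx⟩ := Group.mem_conjugatesOfSet_iff.1 hx
    obtain ⟨g, rfl⟩ := isConj_iff.1 hsx
    obtain ⟨t, ⟨ht, hk⟩, -⟩ := hT g⁻¹
    have hmem : t⁻¹ * s * t ∈ K := hRK <|
      Subgroup.normalClosure_normal.conj_mem' s (Subgroup.subset_normalClosure hs) t
    refine ⟨(⟨t⁻¹ * g⁻¹, hk⟩ : K)⁻¹ * ⟨t⁻¹ * s * t, hmem⟩ * ⟨t⁻¹ * g⁻¹, hk⟩, ?_, ?_⟩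
    · refine Subgroup.normalClosure_normal.conj_mem' _ (Subgroup.subset_normalClosure ?_) _
      exact ⟨s, hs, t, ht, rfl⟩
    · simp [mul_assoc]
  · refine Subgroup.map_le_iff_le_comap.2 (Subgroup.normalClosure_le_normal ?_)
    rintro k ⟨s, hs, t, -, hk⟩
    change (k : F) ∈ Subgroup.normalClosure S
    rw [hk]
    exact Subgroup.normalClosure_normal.conj_mem' s (Subgroup.subset_normalClosure hs) t
end

section
/- Let G be a group, g ∈ G, and N a normal subgroup of G. Let p be an integer with f = g^p ∈ N, and let T be a right transversal of the subgroup ⟨g⟩N in G (that is, G is the disjoint union of the cosets ⟨g⟩N·t for t ∈ T). Then the normal closure of f in G equals the normal closure in N of the set { t⁻¹ f t : t ∈ T }. -/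
/-- Let `N ⊴ G`, let `g ∈ G` and `f = g^p ∈ N`, and let `T` be a right transversal of
the subgroup `⟨g⟩N` in `G`. Then the normal closure of `f` in `G` equals the normal
closure in `N` of the set `{t⁻¹ f t : t ∈ T}`. -/
theorem normalClosure_power_eq_normalClosure_conjugates_in_normal_subgroup
    (G : Type*) [Group G] (g : G) (N : Subgroup G) (hN : N.Normal)
    (p : ℤ) (f : G) (hf : f = g ^ p) (hfN : f ∈ N) (T : Set G)
    (hT : ∀ x : G, ∃! t, t ∈ T ∧ x * t⁻¹ ∈ (Subgroup.closure {g} ⊔ N)) :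
    Subgroup.normalClosure {f} =
      Subgroup.map N.subtype
        (Subgroup.normalClosure {k : N | ∃ t ∈ T, (k : G) = t⁻¹ * f * t}) := by
  apply le_antisymm
  · refine (Subgroup.closure_le _).2 fun y hy => ?_
    obtain ⟨f, rfl, hconj⟩ := Group.mem_conjugatesOfSet_iff.1 hy
    obtain ⟨c, rfl⟩ := isConj_iff.1 hconj
    obtain ⟨t, ⟨ht, hct⟩, -⟩ := hT c⁻¹
    obtain ⟨a, ha, n, hn, han⟩ := Subgroup.mem_sup_of_normal_right.1 hct
    obtain ⟨k, rfl⟩ := Subgroup.mem_closure_singleton.1 ha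
    have hcomm : Commute (g ^ k) f := hf ▸ Commute.zpow_zpow_self g k p
    have hc : c = t⁻¹ * n⁻¹ * (g ^ k)⁻¹ := by
      rw [← inv_inj, ← mul_left_inj t⁻¹, ← han]
      group
    have hft : t⁻¹ * f * t ∈ N := by simpa using hN.conj_mem f hfN t⁻¹
    have hnt : t⁻¹ * n⁻¹ * t ∈ N := by simpa using hN.conj_mem n⁻¹ (inv_mem hn) t⁻¹
    have hmem : (⟨_, hft⟩ : N) ∈
        Subgroup.normalClosure {k : N | ∃ t ∈ T, (k : G) = t⁻¹ * f * t} :=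
      Subgroup.subset_normalClosure ⟨t, ht, rfl⟩
    refine ⟨_, Subgroup.normalClosure_normal.conj_mem _ hmem ⟨_, hnt⟩, ?_⟩
    calc
      t⁻¹ * n⁻¹ * t * (t⁻¹ * f * t) * (t⁻¹ * n⁻¹ * t)⁻¹
          = t⁻¹ * n⁻¹ * f * n * t := by group
      _ = t⁻¹ * n⁻¹ * ((g ^ k)⁻¹ * f * g ^ k) * n * t := by
        rw [hcomm.inv_left.eq, inv_mul_cancel_right]
      _ = c * f * c⁻¹ := by
        rw [hc]
        simp only [mul_inv_rev, inv_inv, mul_assoc]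
  · refine Subgroup.map_le_iff_le_comap.2 (Subgroup.normalClosure_le_normal ?_)
    rintro x ⟨t, -, hx⟩
    have hmem := Subgroup.normalClosure_normal.conj_mem f
      (Subgroup.subset_normalClosure (Set.mem_singleton f)) t⁻¹
    rw [inv_inv, ← hx] at hmem
    exact hmem
end

section
/- Let G be a finitely presented group containing a finite-index normal subgroup M that admits a finite presentation with at least two more generators than relations. Then for every natural number n, G contains a normal subgroup of finite index strictly greater than n. -/
/-- A group is finitely presentable if it is isomorphic to a presented group on a
finite generating set with a finite set of relations. -/
def FinitelyPresentable (G : Type*) [Group G] : Prop :=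
  ∃ (X : Type) (_ : Fintype X) (R : Finset (FreeGroup X)),
    Nonempty (G ≃* PresentedGroup (R : Set (FreeGroup X)))

/-- The linear map sending a choice of images `v` of the generators in `k` to the values at
the elements of `R` of the induced homomorphism from the free group to `k`. -/
def FreeGroup.relatorEval {X : Type*} (k : Type*) [CommRing k] (R : Set (FreeGroup X)) :
    (X → k) →ₗ[k] (R → k) where
  toFun v r := (FreeGroup.lift (fun x => Multiplicative.ofAdd (v x)) r.1).toAdd
  map_add' v w := by
    have h : FreeGroup.lift (fun x => Multiplicative.ofAdd ((v + w) x)) =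
        FreeGroup.lift (fun x => Multiplicative.ofAdd (v x)) *
          FreeGroup.lift (fun x => Multiplicative.ofAdd (w x)) := by
      ext x
      simp
    funext r
    exact congrArg Multiplicative.toAdd (DFunLike.congr_fun h r.1)
  map_smul' c v := by
    have h : FreeGroup.lift (fun x => Multiplicative.ofAdd ((c • v) x)) =
        (AddMonoidHom.toMultiplicative (AddMonoidHom.mulLeft c)).comp
          (FreeGroup.lift (fun x => Multiplicative.ofAdd (v x))) := by
      ext x
      simp
    funext r
    exact congrArg Multiplicative.toAdd (DFunLike.congr_fun h r.1)

/-- A group presented with fewer relations than generators has a nontrivial homomorphism to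
the additive group of any field. -/
theorem PresentedGroup.exists_hom_ne_one {X : Type*} [Fintype X] (k : Type*) [Field k]
    (R : Finset (FreeGroup X)) (hR : R.card < Fintype.card X) :
    ∃ f : PresentedGroup (R : Set (FreeGroup X)) →* Multiplicative k, f ≠ 1 := by
  have hker : LinearMap.ker (FreeGroup.relatorEval k (R : Set (FreeGroup X))) ≠ ⊥ := by
    apply LinearMap.ker_ne_bot_of_finrank_lt
    simpa using hR
  obtain ⟨v, hv, hv0⟩ := Submodule.exists_mem_ne_zero_of_ne_bot hker
  have hrel : ∀ r ∈ (R : Set (FreeGroup X)),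
      FreeGroup.lift (fun x => Multiplicative.ofAdd (v x)) r = 1 := fun r hr =>
    Multiplicative.toAdd.injective (congrFun (LinearMap.mem_ker.mp hv) ⟨r, hr⟩)
  refine ⟨PresentedGroup.toGroup hrel, fun h => hv0 (funext fun x => ?_)⟩
  have hx := DFunLike.congr_fun h (PresentedGroup.of x)
  rw [PresentedGroup.toGroup.of] at hx
  exact Multiplicative.ofAdd.injective hx

/-- The kernel of a nontrivial homomorphism to a group of prime order has that prime as index. -/
theorem MonoidHom.index_ker_of_prime_card {H A : Type*} [Group H] [Group A]
    (hA : (Nat.card A).Prime) (f : H →* A) (hf : f ≠ 1) : f.ker.index = Nat.card A := by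
  rw [Subgroup.index_ker]
  refine ((Nat.dvd_prime hA).mp (Subgroup.card_subgroup_dvd_card f.range)).resolve_left ?_
  intro h
  exact hf (MonoidHom.range_eq_bot_iff.mp (Subgroup.card_eq_one.mp h))

/-- If a finitely presented group `G` has a finite-index normal subgroup `M` admitting
a finite presentation with at least two more generators than relations, then `G` has
normal subgroups of arbitrarily large finite index. -/
theorem exists_normal_subgroup_of_large_finite_index
    (G : Type*) [Group G] (hG : FinitelyPresentable G)
    (M : Subgroup G) (hMnormal : M.Normal) (hMindex : M.FiniteIndex)
    (hM : ∃ (X : Type) (_ : Fintype X) (R : Finset (FreeGroup X)),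
      Nonempty (M ≃* PresentedGroup (R : Set (FreeGroup X))) ∧
        R.card + 2 ≤ Fintype.card X) :
    ∀ n : ℕ, ∃ K : Subgroup G, K.Normal ∧ K.FiniteIndex ∧ n < K.index := by
  intro n
  obtain ⟨X, _, R, ⟨e⟩, hR⟩ := hM
  obtain ⟨p, hnp, hp⟩ := Nat.exists_infinite_primes (n + 1)
  have : Fact p.Prime := ⟨hp⟩
  obtain ⟨f, hf⟩ := PresentedGroup.exists_hom_ne_one (ZMod p) R (by omega)
  have hcard : Nat.card (Multiplicative (ZMod p)) = p := by simp
  have hfe : f.comp e.toMonoidHom ≠ 1 := by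
    intro h
    refine hf (MonoidHom.ext fun y => ?_)
    simpa using DFunLike.congr_fun h (e.symm y)
  have hker := MonoidHom.index_ker_of_prime_card (hcard.symm ▸ hp) _ hfe
  rw [hcard] at hker
  set L := (f.comp e.toMonoidHom).ker.map M.subtype
  have hL : L.index = p * M.index := by
    rw [Subgroup.index_map_subtype, hker]
  have hL_fin : L.FiniteIndex := ⟨by rw [hL]; exact mul_ne_zero hp.ne_zero hMindex.index_ne_zero⟩
  refine ⟨L.normalCore, inferInstance, inferInstance, ?_⟩
  calc n < p := hnp
    _ ≤ p * M.index := Nat.le_mul_of_pos_right p (Nat.pos_of_ne_zero hMindex.index_ne_zero)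
    _ = L.index := hL.symm
    _ ≤ L.normalCore.index := Subgroup.index_antitone L.normalCore_le
end
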